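/- (Conditional mean of RWG increments.) For every n ≥ 0, almost surely E[ξ_{n+1} | F_n] = μ + θ·i_n + m·j_n + ρ·k_n, where i_n = 1_{S_n∈V_{0,0}∪V_{0,1}} − 1_{S_n∈V_{1,0}∪V_{1,1}}, j_n = 1_{S_n∈V_{0,0}∪V_{1,0}} − 1_{S_n∈V_{0,1}∪V_{1,1}}, k_n = 1_{S_n∈V_{0,0}∪V_{1,1}} − 1_{S_n∈V_{0,1}∪V_{1,0}}. -/

import Mathlib

open MeasureTheory ProbabilityTheory Real Filter Set
open scoped BigOperators NNReal

noncomputable section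

namespace RWG

abbrev E : Type := EuclideanSpace ℝ (Fin 3)

def vec (x y z : ℝ) : E := (EuclideanSpace.equiv (Fin 3) ℝ).symm ![x, y, z]

/-- The four families of vertices of the `2h` graphite lattice. -/
def V (a h : ℝ) (i j : Fin 2) : Set E :=
  {v | ∃ k l n : ℤ, v =
    vec (a * ((-1 : ℝ) ^ ((i : ℕ) + 1) * (if j = 1 then (1 : ℝ) else 0) + (3 / 2) * k))
        (a * ((Real.sqrt 3 / 2) * k + Real.sqrt 3 * l))
        (h * (2 * n + (if i ≠ j then (1 : ℝ) else 0)))}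

/-- Horizontal jump from a vertex of horizontal type `i` in direction `k`. -/
def w (a : ℝ) (i : Fin 2) (k : Fin 3) : E :=
  vec (a * Real.cos (2 * (k : ℕ) * π / 3 + (i : ℕ) * π))
      (a * Real.sin (2 * (k : ℕ) * π / 3 + (i : ℕ) * π)) 0

/-- `S` is a random walk on graphite with parameters `a, h, p, α, q` and natural filtration `F`. -/
structure IsRWG {Ω : Type} [MeasurableSpace Ω] (P : Measure Ω)
    (a h p α : ℝ) (q : Fin 2 → Fin 2 → Fin 3 → ℝ)
    (S : ℕ → Ω → E) (F : ℕ → MeasurableSpace Ω) : Prop where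
  prob : IsProbabilityMeasure P
  ha : 0 < a
  hh : 0 < h
  hp0 : 0 ≤ p
  hp1 : p ≤ 1
  hα0 : 0 < α
  hα1 : α < 1
  hq : ∀ i j k, 0 ≤ q i j k
  hqsum0 : ∀ i, q i 0 0 + q i 0 1 + q i 0 2 = 1 - p
  hqsum1 : ∀ i, q i 1 0 + q i 1 1 + q i 1 2 = 1
  hS0 : ∀ ω, S 0 ω = 0
  hSmeas : ∀ n, Measurable (S n)
  hF : ∀ n, F n =
    MeasurableSpace.comap (fun ω (k : Fin n) => S ((k : ℕ) + 1) ω - S (k : ℕ) ω)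
      MeasurableSpace.pi
  hTrans : ∀ (n : ℕ) (f : E → ℝ), Measurable f → (∃ C, ∀ x, |f x| ≤ C) →
    P[fun ω => f (S (n + 1) ω)|F n] =ᵐ[P]
      fun ω => ∑ i : Fin 2,
        ((V a h i 0).indicator (fun _ => (1 : ℝ)) (S n ω) *
          (α * p * f (S n ω + vec 0 0 h) + (1 - α) * p * f (S n ω + vec 0 0 (-h)) +
            ∑ k : Fin 3, q i 0 k * f (S n ω + w a i k)) +
        (V a h i 1).indicator (fun _ => (1 : ℝ)) (S n ω) *
          ∑ k : Fin 3, q i 1 k * f (S n ω + w a i k))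

def uu (q : Fin 2 → Fin 2 → Fin 3 → ℝ) (i j : Fin 2) : ℝ := q i j 1 + q i j 2

def vv (q : Fin 2 → Fin 2 → Fin 3 → ℝ) (i j : Fin 2) : ℝ := q i j 1 - q i j 2

def ss (q : Fin 2 → Fin 2 → Fin 3 → ℝ) (i j : Fin 2) : ℝ := uu q i j * (1 - uu q i j)

def tt (q : Fin 2 → Fin 2 → Fin 3 → ℝ) (i j : Fin 2) : ℝ := vv q i j * (uu q i j - 1)

/-- The vector `μ` of the RWG. -/
def muG (a h p α : ℝ) (q : Fin 2 → Fin 2 → Fin 3 → ℝ) : E :=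
  vec (3 * a / 8 * (-(uu q 0 0 + uu q 0 1) + (uu q 1 0 + uu q 1 1)))
      (a * Real.sqrt 3 / 8 * ((vv q 0 0 + vv q 0 1) - (vv q 1 0 + vv q 1 1)))
      (h * p / 2 * (2 * α - 1))

/-- The vector `m` of the RWG. -/
def mG (a h p α : ℝ) (q : Fin 2 → Fin 2 → Fin 3 → ℝ) : E :=
  vec (3 * a / 8 * (-(uu q 0 0 - uu q 0 1) + (uu q 1 0 - uu q 1 1)))
      (a * Real.sqrt 3 / 8 * ((vv q 0 0 - vv q 0 1) - (vv q 1 0 - vv q 1 1)))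
      (h * p / 2 * (2 * α - 1))

/-- The vector `θ` of the RWG. -/
def thetaG (a p : ℝ) (q : Fin 2 → Fin 2 → Fin 3 → ℝ) : E :=
  vec (a * ((1 - p / 2) - 3 / 8 * ((uu q 0 0 + uu q 0 1) + (uu q 1 0 + uu q 1 1))))
      (a * Real.sqrt 3 / 8 * ((vv q 0 0 + vv q 0 1) + (vv q 1 0 + vv q 1 1))) 0

/-- The vector `ρ` of the RWG. -/
def rhoG (a p : ℝ) (q : Fin 2 → Fin 2 → Fin 3 → ℝ) : E :=
  vec (a * (-(p / 2) - 3 / 8 * ((uu q 0 0 - uu q 0 1) + (uu q 1 0 - uu q 1 1))))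
      (a * Real.sqrt 3 / 8 * ((vv q 0 0 - vv q 0 1) + (vv q 1 0 - vv q 1 1))) 0

/-- The vector `ζ = (0, 0, hp(2α−1))`. -/
def zetaG (h p α : ℝ) : E := vec 0 0 (h * p * (2 * α - 1))

/-- The indicator process `i_n`. -/
def iP {Ω : Type} (a h : ℝ) (S : ℕ → Ω → E) (n : ℕ) (ω : Ω) : ℝ :=
  (V a h 0 0 ∪ V a h 0 1).indicator (fun _ => (1 : ℝ)) (S n ω) -
    (V a h 1 0 ∪ V a h 1 1).indicator (fun _ => (1 : ℝ)) (S n ω)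

/-- The indicator process `j_n`. -/
def jP {Ω : Type} (a h : ℝ) (S : ℕ → Ω → E) (n : ℕ) (ω : Ω) : ℝ :=
  (V a h 0 0 ∪ V a h 1 0).indicator (fun _ => (1 : ℝ)) (S n ω) -
    (V a h 0 1 ∪ V a h 1 1).indicator (fun _ => (1 : ℝ)) (S n ω)

/-- The indicator process `k_n`. -/
def kP {Ω : Type} (a h : ℝ) (S : ℕ → Ω → E) (n : ℕ) (ω : Ω) : ℝ :=
  (V a h 0 0 ∪ V a h 1 1).indicator (fun _ => (1 : ℝ)) (S n ω) -
    (V a h 0 1 ∪ V a h 1 0).indicator (fun _ => (1 : ℝ)) (S n ω)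

/-- The matrix `σ²` of the RWG. -/
def sigmaG (a h p α : ℝ) (q : Fin 2 → Fin 2 → Fin 3 → ℝ) : Matrix (Fin 3) (Fin 3) ℝ :=
  !![a ^ 2 / 4 * (2 * p * (1 - p) + 9 / 4 * (ss q 0 0 + ss q 1 0 + ss q 0 1 + ss q 1 1)
        - 3 * p * (uu q 0 0 + uu q 1 0)),
     a ^ 2 * Real.sqrt 3 / 16 * (3 * (tt q 0 0 + tt q 1 0 + tt q 0 1 + tt q 1 1)
        + 2 * p * (vv q 0 0 + vv q 1 0)),
     a * h / 8 * (-4 * p * (1 - p) * (2 * α - 1)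
        + 3 * p * (2 * α - 1) * (uu q 0 0 + uu q 1 0));
     a ^ 2 * Real.sqrt 3 / 16 * (3 * (tt q 0 0 + tt q 1 0 + tt q 0 1 + tt q 1 1)
        + 2 * p * (vv q 0 0 + vv q 1 0)),
     3 * a ^ 2 / 16 * ((uu q 0 0 + uu q 1 0 + uu q 0 1 + uu q 1 1)
        - ((vv q 0 0) ^ 2 + (vv q 1 0) ^ 2 + (vv q 0 1) ^ 2 + (vv q 1 1) ^ 2)),
     -(a * h * Real.sqrt 3 / 8) * (p * (2 * α - 1) * (vv q 0 0 + vv q 1 0));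
     a * h / 8 * (-4 * p * (1 - p) * (2 * α - 1)
        + 3 * p * (2 * α - 1) * (uu q 0 0 + uu q 1 0)),
     -(a * h * Real.sqrt 3 / 8) * (p * (2 * α - 1) * (vv q 0 0 + vv q 1 0)),
     h ^ 2 * p / 2 * (1 - p * (2 * α - 1) ^ 2)]

/-- The matrix `γ` of the RWG. -/
def gammaG (a h p α : ℝ) (q : Fin 2 → Fin 2 → Fin 3 → ℝ) : Matrix (Fin 3) (Fin 3) ℝ :=
  !![a ^ 2 / 4 * (2 * p * (1 - p) + 9 / 4 * (ss q 0 0 + ss q 1 0 - ss q 0 1 - ss q 1 1)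
        - 3 * p * (uu q 0 0 + uu q 1 0)),
     a ^ 2 * Real.sqrt 3 / 16 * (3 * (tt q 0 0 + tt q 1 0 - tt q 0 1 - tt q 1 1)
        + 2 * p * (vv q 0 0 + vv q 1 0)),
     a * h / 8 * (-4 * p * (1 - p) * (2 * α - 1)
        + 3 * p * (2 * α - 1) * (uu q 0 0 + uu q 1 0));
     a ^ 2 * Real.sqrt 3 / 16 * (3 * (tt q 0 0 + tt q 1 0 - tt q 0 1 - tt q 1 1)
        + 2 * p * (vv q 0 0 + vv q 1 0)),
     3 * a ^ 2 / 16 * ((uu q 0 0 + uu q 1 0 - uu q 0 1 - uu q 1 1)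
        - ((vv q 0 0) ^ 2 + (vv q 1 0) ^ 2 - (vv q 0 1) ^ 2 - (vv q 1 1) ^ 2)),
     -(a * h * Real.sqrt 3 / 8) * (p * (2 * α - 1) * (vv q 0 0 + vv q 1 0));
     a * h / 8 * (-4 * p * (1 - p) * (2 * α - 1)
        + 3 * p * (2 * α - 1) * (uu q 0 0 + uu q 1 0)),
     -(a * h * Real.sqrt 3 / 8) * (p * (2 * α - 1) * (vv q 0 0 + vv q 1 0)),
     h ^ 2 * p / 2 * (1 - p * (2 * α - 1) ^ 2)]

/-- The matrix `δ` of the RWG. -/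
def deltaG (a h p α : ℝ) (q : Fin 2 → Fin 2 → Fin 3 → ℝ) : Matrix (Fin 3) (Fin 3) ℝ :=
  !![a ^ 2 / 4 * (9 / 4 * (ss q 0 0 - ss q 1 0 - ss q 0 1 + ss q 1 1)
        - 3 * p * (uu q 0 0 - uu q 1 0)),
     a ^ 2 * Real.sqrt 3 / 16 * (3 * (tt q 0 0 - tt q 1 0 - tt q 0 1 + tt q 1 1)
        + 2 * p * (vv q 0 0 - vv q 1 0)),
     a * h / 8 * (3 * p * (2 * α - 1) * (uu q 0 0 - uu q 1 0));
     a ^ 2 * Real.sqrt 3 / 16 * (3 * (tt q 0 0 - tt q 1 0 - tt q 0 1 + tt q 1 1)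
        + 2 * p * (vv q 0 0 - vv q 1 0)),
     3 * a ^ 2 / 16 * ((uu q 0 0 - uu q 1 0 - uu q 0 1 + uu q 1 1)
        - ((vv q 0 0) ^ 2 - (vv q 1 0) ^ 2 - (vv q 0 1) ^ 2 + (vv q 1 1) ^ 2)),
     -(a * h * Real.sqrt 3 / 8) * (p * (2 * α - 1) * (vv q 0 0 - vv q 1 0));
     a * h / 8 * (3 * p * (2 * α - 1) * (uu q 0 0 - uu q 1 0)),
     -(a * h * Real.sqrt 3 / 8) * (p * (2 * α - 1) * (vv q 0 0 - vv q 1 0)),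
     0]

/-- A probability measure on `ℝ³` is the centered Gaussian law with covariance matrix `Γ`
if every linear functional pushes it to the corresponding one-dimensional Gaussian law. -/
def IsCenteredGaussian (G : Measure E) (Γ : Matrix (Fin 3) (Fin 3) ℝ) : Prop :=
  IsProbabilityMeasure G ∧
    ∀ u : Fin 3 → ℝ, G.map (fun x => ∑ r, u r * x r) =
      gaussianReal 0 (Real.toNNReal (∑ r, ∑ c, u r * Γ r c * u c))

/-- View a point of `ℝ³` as a plain function on indices. -/
def toFun (x : E) : Fin 3 → ℝ := x

end RWG

/-! The transition law is given for bounded functions only; but the jumps are bounded, so by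
induction every `S n` is almost surely bounded, and truncation extends the law to continuous linear
functionals, hence to the vector-valued conditional mean. Testing the law on the constant `1` shows
that `S n` almost surely lies in exactly one of the four families `V i j`. The conditional mean of
the increment is then the mean jump from that family, and `μ, θ, m, ρ` are the Walsh–Hadamard
coefficients of the four mean jumps, as functions of the signs `(-1) ^ i` and `(-1) ^ j`. -/

lemma exists_forall_ae_mem_closedBall {Ω ι E : Type*} [MeasurableSpace Ω] {μ : Measure Ω}
    [Finite ι] [NormedAddCommGroup E] {Z : ι → Ω → E} (hZ : ∀ t, MemLp (Z t) ⊤ μ) :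
    ∃ R, ∀ t, ∀ᵐ ω ∂μ, Z t ω ∈ Metric.closedBall 0 R := by
  obtain ⟨R, hR⟩ := Finite.exists_le fun t ↦ lpNorm (Z t) ⊤ μ
  refine ⟨R, fun t ↦ ?_⟩
  filter_upwards [ae_le_lpNorm_exponent_top (hZ t)] with ω hω
  exact mem_closedBall_zero_iff.2 (hω.trans (hR t))

section FiniteCondLaw

variable {Ω ι E : Type*} {m mΩ : MeasurableSpace Ω} {μ : Measure Ω} [Fintype ι]
  [MeasurableSpace E] {Y : Ω → E} {c : ι → Ω → ℝ} {Z : ι → Ω → E}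

/-- Given `m`, the random variable `Y` sits at one of the finitely many random points `Z t`, with
conditional probabilities `c t`. The law is tested on bounded measurable functions, as in
`RWG.IsRWG.hTrans`. -/
def HasFiniteCondLaw (μ : Measure Ω) (m : MeasurableSpace Ω) (Y : Ω → E) (c : ι → Ω → ℝ)
    (Z : ι → Ω → E) : Prop :=
  ∀ f : E → ℝ, Measurable f → (∃ C, ∀ x, |f x| ≤ C) →
    μ[fun ω ↦ f (Y ω)|m] =ᵐ[μ] fun ω ↦ ∑ t, c t ω * f (Z t ω)

namespace HasFiniteCondLaw

lemma ae_sum_eq_one [IsFiniteMeasure μ] (hY : HasFiniteCondLaw μ m Y c Z) (hm : m ≤ mΩ) :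
    ∀ᵐ ω ∂μ, ∑ t, c t ω = 1 := by
  have hone := hY (fun _ ↦ 1) measurable_const ⟨1, by simp⟩
  rw [condExp_const hm] at hone
  filter_upwards [hone] with ω hω
  simpa only [mul_one] using hω.symm

lemma ae_mem [IsFiniteMeasure μ] (hY : HasFiniteCondLaw μ m Y c Z) (hm : m ≤ mΩ)
    (hYm : AEMeasurable Y μ) {B : Set E} (hB : MeasurableSet B)
    (hZ : ∀ t, ∀ᵐ ω ∂μ, Z t ω ∈ B) : ∀ᵐ ω ∂μ, Y ω ∈ B := by
  set f : E → ℝ := Bᶜ.indicator 1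
  have hf : Measurable f := measurable_one.indicator hB.compl
  have hf_nonneg : ∀ x, 0 ≤ f x := indicator_nonneg fun _ _ ↦ zero_le_one
  have hf_le : ∀ x, |f x| ≤ 1 := fun x ↦ by
    rw [abs_of_nonneg (hf_nonneg x)]
    exact indicator_le_self' (fun _ _ ↦ zero_le_one) x
  have hcond : μ[fun ω ↦ f (Y ω)|m] =ᵐ[μ] 0 := by
    filter_upwards [hY f hf ⟨1, hf_le⟩, ae_all_iff.2 hZ] with ω hω hZω
    rw [hω]
    exact Finset.sum_eq_zero fun t _ ↦ mul_eq_zero_of_right _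
      (indicator_of_notMem (notMem_compl_iff.2 (hZω t)) _)
  have hint : Integrable (fun ω ↦ f (Y ω)) μ :=
    .of_bound (hf.comp_aemeasurable hYm).aestronglyMeasurable 1 (ae_of_all _ fun ω ↦ hf_le _)
  have hzero : ∫ ω, f (Y ω) ∂μ = 0 := by
    rw [← integral_condExp hm, integral_congr_ae hcond, Pi.zero_def, integral_zero]
  rw [integral_eq_zero_iff_of_nonneg (fun ω ↦ hf_nonneg _) hint] at hzero
  filter_upwards [hzero] with ω hω
  by_contra hmem
  exact one_ne_zero ((indicator_of_mem (mem_compl hmem) 1).symm.trans hω)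

lemma condExp_comp [IsFiniteMeasure μ] (hY : HasFiniteCondLaw μ m Y c Z) (hm : m ≤ mΩ)
    (hYm : AEMeasurable Y μ) {B : Set E} (hB : MeasurableSet B)
    (hZ : ∀ t, ∀ᵐ ω ∂μ, Z t ω ∈ B) {f : E → ℝ} (hf : Measurable f)
    (hfB : ∃ C, ∀ x ∈ B, |f x| ≤ C) :
    μ[fun ω ↦ f (Y ω)|m] =ᵐ[μ] fun ω ↦ ∑ t, c t ω * f (Z t ω) := by
  obtain ⟨C, hC⟩ := hfB
  have hbound : ∀ x, |B.indicator f x| ≤ max C 0 := fun x ↦ by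
    by_cases hx : x ∈ B
    · exact indicator_of_mem hx f ▸ le_max_of_le_left (hC x hx)
    · rw [indicator_of_notMem hx, abs_zero]
      exact le_max_right C 0
  have htrunc : (fun ω ↦ f (Y ω)) =ᵐ[μ] fun ω ↦ B.indicator f (Y ω) := by
    filter_upwards [hY.ae_mem hm hYm hB hZ] with ω hω
    exact (indicator_of_mem hω f).symm
  refine (condExp_congr_ae htrunc).trans ?_
  filter_upwards [hY _ (hf.indicator hB) ⟨_, hbound⟩, ae_all_iff.2 hZ] with ω hω hZω
  rw [hω]
  exact Finset.sum_congr rfl fun t _ ↦ by rw [indicator_of_mem (hZω t)]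

section NormedSpace

variable {E : Type*} [NormedAddCommGroup E] [MeasurableSpace E] [BorelSpace E]
  [SecondCountableTopology E] {Y : Ω → E} {Z : ι → Ω → E} [IsFiniteMeasure μ]

lemma memLp_top (hY : HasFiniteCondLaw μ m Y c Z) (hm : m ≤ mΩ) (hYm : AEMeasurable Y μ)
    (hZ : ∀ t, MemLp (Z t) ⊤ μ) : MemLp Y ⊤ μ := by
  obtain ⟨R, hR⟩ := exists_forall_ae_mem_closedBall hZ
  refine memLp_top_of_bound hYm.aestronglyMeasurable R ?_
  filter_upwards [hY.ae_mem hm hYm Metric.isClosed_closedBall.measurableSet hR] with ω hω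
  exact mem_closedBall_zero_iff.1 hω

variable [NormedSpace ℝ E] [CompleteSpace E]

lemma condExp_eq_sum (hY : HasFiniteCondLaw μ m Y c Z) (hm : m ≤ mΩ) (hYm : AEMeasurable Y μ)
    (hZ : ∀ t, MemLp (Z t) ⊤ μ) : μ[Y|m] =ᵐ[μ] fun ω ↦ ∑ t, c t ω • Z t ω := by
  have hint : Integrable Y μ := (hY.memLp_top hm hYm hZ).integrable le_top
  obtain ⟨R, hR⟩ := exists_forall_ae_mem_closedBall hZ
  have hdual (L : StrongDual ℝ E) :
      (fun ω ↦ L (μ[Y|m] ω - ∑ t, c t ω • Z t ω)) =ᵐ[μ] 0 := by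
    have hL : ∃ C, ∀ x ∈ Metric.closedBall 0 R, |L x| ≤ C :=
      ⟨‖L‖ * R, fun x hx ↦ L.le_opNorm_of_le (mem_closedBall_zero_iff.1 hx)⟩
    filter_upwards [L.comp_condExp_comm (m := m) hint, hY.condExp_comp hm hYm
      Metric.isClosed_closedBall.measurableSet hR L.measurable hL] with ω hcomm hω
    have hLω : L (μ[Y|m] ω) = ∑ t, c t ω * L (Z t ω) := hcomm.trans hω
    simp only [map_sub, map_sum, map_smul, smul_eq_mul, hLω, sub_self, Pi.zero_apply]
  filter_upwards [ae_eq_zero_of_forall_dual ℝ hdual] with ω hω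
  exact sub_eq_zero.1 hω

lemma condExp_sub_eq_sum {X : Ω → E} {D : ι → Ω → E}
    (hY : HasFiniteCondLaw μ m Y c fun t ↦ X + D t) (hm : m ≤ mΩ) (hYm : AEMeasurable Y μ)
    (hXm : StronglyMeasurable[m] X) (hX : MemLp X ⊤ μ) (hD : ∀ t, MemLp (D t) ⊤ μ) :
    μ[Y - X|m] =ᵐ[μ] fun ω ↦ ∑ t, c t ω • D t ω := by
  have hZ (t : ι) : MemLp (X + D t) ⊤ μ := hX.add (hD t)
  have hX_int : Integrable X μ := hX.integrable le_top
  filter_upwards [condExp_sub ((hY.memLp_top hm hYm hZ).integrable le_top) hX_int m,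
    hY.condExp_eq_sum hm hYm hZ, hY.ae_sum_eq_one hm] with ω hsub hmean hone
  rw [hsub, Pi.sub_apply, hmean, condExp_of_stronglyMeasurable hm hXm hX_int]
  simp only [Pi.add_apply, smul_add, Finset.sum_add_distrib, ← Finset.sum_smul, hone, one_smul,
    add_sub_cancel_left]

end NormedSpace

end HasFiniteCondLaw

end FiniteCondLaw

lemma sum_indicator_one_eq_one_iff {ι α R : Type*} [Fintype ι] [NonAssocSemiring R] [CharZero R]
    {s : ι → Set α} {x : α} :
    ∑ t, (s t).indicator (fun _ ↦ (1 : R)) x = 1 ↔ ∃! t, x ∈ s t := by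
  classical
  simp only [indicator_apply, Finset.sum_boole, Nat.cast_eq_one,
    Finset.card_eq_one_iff_existsUnique, Finset.mem_filter_univ]

namespace RWG

variable {a h p α : ℝ} {q : Fin 2 → Fin 2 → Fin 3 → ℝ}

/-- The jumps from a vertex of horizontal type `i`: `Sum.inl 0` is up, `Sum.inl 1` is down and
`Sum.inr k` is horizontal in direction `k`. -/
def jump (a h : ℝ) (i : Fin 2) : Fin 2 ⊕ Fin 3 → E :=
  Sum.elim ![vec 0 0 h, vec 0 0 (-h)] (w a i)

/-- The probability of each jump from a vertex of `V a h i j`. -/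
def jumpProb (p α : ℝ) (q : Fin 2 → Fin 2 → Fin 3 → ℝ) (i j : Fin 2) : Fin 2 ⊕ Fin 3 → ℝ :=
  Sum.elim (if j = 0 then ![α * p, (1 - α) * p] else 0) (q i j)

/-- The mean jump from a vertex of `V a h i j`. -/
def localDrift (a h p α : ℝ) (q : Fin 2 → Fin 2 → Fin 3 → ℝ) (i j : Fin 2) : E :=
  ∑ s, jumpProb p α q i j s • jump a h i s

lemma vec_add_vec (x y z x' y' z' : ℝ) :
    vec x y z + vec x' y' z' = vec (x + x') (y + y') (z + z') := by
  ext r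
  fin_cases r <;> rfl

lemma smul_vec (c x y z : ℝ) : c • vec x y z = vec (c * x) (c * y) (c * z) := by
  ext r
  fin_cases r <;> rfl

lemma sum_smul_w (a : ℝ) (i : Fin 2) (c : Fin 3 → ℝ) :
    ∑ k, c k • w a i k = (-1 : ℝ) ^ (i : ℕ) •
      vec (a * (c 0 - (c 1 + c 2) / 2)) (a * √3 / 2 * (c 1 - c 2)) 0 := by
  have hcos₁ : cos (2 * π / 3) = -(1 / 2) := by
    rw [show 2 * π / 3 = π - π / 3 by ring, cos_pi_sub, cos_pi_div_three]
  have hsin₁ : sin (2 * π / 3) = √3 / 2 := by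
    rw [show 2 * π / 3 = π - π / 3 by ring, sin_pi_sub, sin_pi_div_three]
  have hcos₂ : cos (2 * 2 * π / 3) = -(1 / 2) := by
    rw [show 2 * 2 * π / 3 = π / 3 + π by ring, cos_add_pi, cos_pi_div_three]
  have hsin₂ : sin (2 * 2 * π / 3) = -(√3 / 2) := by
    rw [show 2 * 2 * π / 3 = π / 3 + π by ring, sin_add_pi, sin_pi_div_three]
  simp only [w, Fin.sum_univ_three, cos_add_nat_mul_pi, sin_add_nat_mul_pi, Fin.coe_ofNat_eq_mod,
    Nat.zero_mod, Nat.one_mod, Nat.mod_succ, Nat.cast_zero, Nat.cast_one, Nat.cast_ofNat, mul_zero,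
    mul_one, zero_mul, zero_div, cos_zero, sin_zero, hcos₁, hsin₁, hcos₂, hsin₂, smul_vec,
    vec_add_vec]
  congr 1 <;> ring

lemma localDrift_eq (i j : Fin 2) :
    localDrift a h p α q i j = (-1 : ℝ) ^ (i : ℕ) •
        vec (a * (q i j 0 - uu q i j / 2)) (a * √3 / 2 * vv q i j) 0 +
      if j = 0 then vec 0 0 (h * p * (2 * α - 1)) else 0 := by
  rw [localDrift, Fintype.sum_sum_type, add_comm]
  refine congrArg₂ (· + ·) (sum_smul_w a i (q i j)) ?_
  have hvert : (α * p) • vec 0 0 h + ((1 - α) * p) • vec 0 0 (-h) =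
      vec 0 0 (h * p * (2 * α - 1)) := by
    simp only [smul_vec, vec_add_vec]
    congr 1 <;> ring
  fin_cases j <;> simp [jumpProb, jump, hvert]

lemma localDrift_eq_walsh (hq0 : ∀ i, q i 0 0 + q i 0 1 + q i 0 2 = 1 - p)
    (hq1 : ∀ i, q i 1 0 + q i 1 1 + q i 1 2 = 1) (i j : Fin 2) :
    localDrift a h p α q i j = muG a h p α q + (-1 : ℝ) ^ (i : ℕ) • thetaG a p q +
      (-1 : ℝ) ^ (j : ℕ) • mG a h p α q + (-1 : ℝ) ^ (i + j : ℕ) • rhoG a p q := by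
  have hq00 (i : Fin 2) : q i 0 0 = 1 - p - uu q i 0 := by
    rw [uu]
    linarith [hq0 i]
  have hq10 (i : Fin 2) : q i 1 0 = 1 - uu q i 1 := by
    rw [uu]
    linarith [hq1 i]
  fin_cases i <;> fin_cases j <;>
    simp only [localDrift_eq, muG, thetaG, mG, rhoG, hq00, hq10, smul_vec, vec_add_vec,
      Fin.zero_eta, Fin.mk_one, Fin.coe_ofNat_eq_mod, Nat.zero_mod, Nat.mod_succ, reduceIte,
      one_ne_zero, add_zero] <;>
    congr 1 <;> ring

/-- The point `x` is a vertex of type `(i, j)` and of no other type. -/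
def HasType (a h : ℝ) (i j : Fin 2) (x : E) : Prop :=
  ∀ i' j', x ∈ V a h i' j' ↔ i' = i ∧ j' = j

section

variable {Ω : Type} {S : ℕ → Ω → E} {n : ℕ} {ω : Ω} {i j : Fin 2}

lemma iP_eq (hV : HasType a h i j (S n ω)) : iP a h S n ω = (-1) ^ (i : ℕ) := by
  fin_cases i <;> fin_cases j <;> simp [iP, indicator, hV _ _]

lemma jP_eq (hV : HasType a h i j (S n ω)) : jP a h S n ω = (-1) ^ (j : ℕ) := by
  fin_cases i <;> fin_cases j <;> simp [jP, indicator, hV _ _]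

lemma kP_eq (hV : HasType a h i j (S n ω)) : kP a h S n ω = (-1) ^ (i + j : ℕ) := by
  fin_cases i <;> fin_cases j <;> simp [kP, indicator, hV _ _]

end

/-- The probability that the walk at `x` makes the jump `t.2` of a vertex of type `t.1`. It vanishes
unless `x` has this type. -/
def transitionProb (a h p α : ℝ) (q : Fin 2 → Fin 2 → Fin 3 → ℝ)
    (t : (Fin 2 × Fin 2) × (Fin 2 ⊕ Fin 3)) (x : E) : ℝ :=
  (V a h t.1.1 t.1.2).indicator (fun _ ↦ 1) x * jumpProb p α q t.1.1 t.1.2 t.2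

lemma sum_jumpProb (hq0 : ∀ i, q i 0 0 + q i 0 1 + q i 0 2 = 1 - p)
    (hq1 : ∀ i, q i 1 0 + q i 1 1 + q i 1 2 = 1) (i j : Fin 2) :
    ∑ s, jumpProb p α q i j s = 1 := by
  have hvert : α * p + (1 - α) * p + (1 - p) = 1 := by ring
  fin_cases j <;> simp [jumpProb, Fin.sum_univ_three, hq0, hq1, hvert]

lemma sum_transitionProb (hq0 : ∀ i, q i 0 0 + q i 0 1 + q i 0 2 = 1 - p)
    (hq1 : ∀ i, q i 1 0 + q i 1 1 + q i 1 2 = 1) (x : E) :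
    ∑ t, transitionProb a h p α q t x =
      ∑ t : Fin 2 × Fin 2, (V a h t.1 t.2).indicator (fun _ ↦ 1) x := by
  rw [Fintype.sum_prod_type]
  simp only [transitionProb, ← Finset.mul_sum, sum_jumpProb hq0 hq1, mul_one]

lemma sum_transitionProb_smul_jump {x : E} {i j : Fin 2} (hV : HasType a h i j x) :
    ∑ t, transitionProb a h p α q t x • jump a h t.1.1 t.2 = localDrift a h p α q i j := by
  rw [Fintype.sum_prod_type, Fintype.sum_eq_single (i, j)]
  · simp [transitionProb, localDrift, (hV i j).2]
  · rintro ⟨i', j'⟩ hne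
    have : x ∉ V a h i' j' := fun hx ↦ hne (Prod.ext_iff.2 ((hV i' j').1 hx))
    simp [transitionProb, this]

namespace IsRWG

variable {Ω : Type} [MeasurableSpace Ω] {P : Measure Ω} {S : ℕ → Ω → E}
  {F : ℕ → MeasurableSpace Ω}

lemma filtration_le (hRW : IsRWG P a h p α q S F) (n : ℕ) : F n ≤ ‹MeasurableSpace Ω› := by
  rw [hRW.hF n]
  exact (measurable_pi_lambda _ fun k ↦ (hRW.hSmeas _).sub (hRW.hSmeas _)).comap_le

lemma measurable_filtration (hRW : IsRWG P a h p α q S F) (n : ℕ) : Measurable[F n] (S n) := by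
  have htel : S n = fun ω ↦ ∑ k : Fin n, (S (k + 1) ω - S k ω) := by
    funext ω
    rw [Fin.sum_univ_eq_sum_range (fun k ↦ S (k + 1) ω - S k ω),
      Finset.sum_range_sub (fun k ↦ S k ω), hRW.hS0, sub_zero]
  have hsum : Measurable fun x : Fin n → E ↦ ∑ k, x k := by fun_prop
  rw [htel, hRW.hF n]
  exact hsum.comp (comap_measurable _)

lemma hasFiniteCondLaw (hRW : IsRWG P a h p α q S F) (n : ℕ) :
    HasFiniteCondLaw P (F n) (S (n + 1)) (fun t ω ↦ transitionProb a h p α q t (S n ω))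
      fun t ↦ S n + fun _ ↦ jump a h t.1.1 t.2 := by
  intro f hf hbound
  filter_upwards [hRW.hTrans n f hf hbound] with ω hω
  rw [hω]
  simp [transitionProb, jumpProb, jump, Fintype.sum_prod_type, mul_add, mul_assoc,
    Finset.mul_sum]

lemma memLp_top (hRW : IsRWG P a h p α q S F) (n : ℕ) : MemLp (S n) ⊤ P := by
  have := hRW.prob
  induction n with
  | zero => exact (funext hRW.hS0 : S 0 = 0) ▸ MemLp.zero
  | succ n ih =>
    exact (hRW.hasFiniteCondLaw n).memLp_top (hRW.filtration_le n) (hRW.hSmeas _).aemeasurable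
      fun t ↦ ih.add (memLp_top_const _)

lemma ae_exists_hasType (hRW : IsRWG P a h p α q S F) (n : ℕ) :
    ∀ᵐ ω ∂P, ∃ i j, HasType a h i j (S n ω) := by
  have := hRW.prob
  filter_upwards [(hRW.hasFiniteCondLaw n).ae_sum_eq_one (hRW.filtration_le n)] with ω hω
  rw [sum_transitionProb hRW.hqsum0 hRW.hqsum1, sum_indicator_one_eq_one_iff] at hω
  obtain ⟨⟨i, j⟩, hmem, huniq⟩ := hω
  refine ⟨i, j, fun i' j' ↦ ⟨fun hx ↦ Prod.ext_iff.1 (huniq (i', j') hx), ?_⟩⟩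
  rintro ⟨rfl, rfl⟩
  exact hmem

lemma condExp_increment (hRW : IsRWG P a h p α q S F) (n : ℕ) :
    P[S (n + 1) - S n|F n] =ᵐ[P]
      fun ω ↦ ∑ t, transitionProb a h p α q t (S n ω) • jump a h t.1.1 t.2 := by
  have := hRW.prob
  exact (hRW.hasFiniteCondLaw n).condExp_sub_eq_sum (hRW.filtration_le n)
    (hRW.hSmeas _).aemeasurable (hRW.measurable_filtration n).stronglyMeasurable
    (hRW.memLp_top n) fun t ↦ memLp_top_const _

end IsRWG

end RWG

theorem rwg_condexp_increment {Ω : Type} [MeasurableSpace Ω] (P : Measure Ω)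
    (a h p α : ℝ) (q : Fin 2 → Fin 2 → Fin 3 → ℝ)
    (S : ℕ → Ω → RWG.E) (F : ℕ → MeasurableSpace Ω)
    (hRW : RWG.IsRWG P a h p α q S F) :
    ∀ n : ℕ, P[fun ω => S (n + 1) ω - S n ω|F n] =ᵐ[P]
      fun ω => RWG.muG a h p α q + RWG.iP a h S n ω • RWG.thetaG a p q +
        RWG.jP a h S n ω • RWG.mG a h p α q + RWG.kP a h S n ω • RWG.rhoG a p q := by
  intro n
  filter_upwards [hRW.condExp_increment n, hRW.ae_exists_hasType n] with ω hdrift ⟨i, j, hV⟩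
  calc
    (P[S (n + 1) - S n|F n]) ω = RWG.localDrift a h p α q i j := by
      rw [hdrift, RWG.sum_transitionProb_smul_jump hV]
    _ = _ := by
      rw [RWG.localDrift_eq_walsh hRW.hqsum0 hRW.hqsum1, RWG.iP_eq hV, RWG.jP_eq hV, RWG.kP_eq hV]
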